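/- Let s_{m,n} = |NC(S_{m,n})|, and in the ring of formal power series ℤ⟦X, Y⟧ let S(X,Y) = Σ_{m,n ≥ 0} s_{m,n} X^m Y^n and let C(Y) = Σ_{n ≥ 0} C_n Y^n be the generating function of the Catalan numbers. Then Y^2 · (1 − X·(1 + C(Y))) · S(X,Y) = C(Y) − 1 − Y. -/

import Mathlib

open Finset

/-- A finpartition of a finite set of points in the plane is *noncrossing* if the
convex hulls (over `ℝ`) of its blocks are pairwise disjoint. -/
def IsNoncrossing {P : Finset ℂ} (π : Finpartition P) : Prop :=
  (π.parts : Set (Finset ℂ)).Pairwise fun B₁ B₂ =>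
    Disjoint (convexHull ℝ (B₁ : Set ℂ)) (convexHull ℝ (B₂ : Set ℂ))

/-- The poset `NC(P)` of noncrossing partitions of `P`, ordered by refinement:
`π ≤ μ` iff every block of `μ` is a union of blocks of `π`. -/
abbrev NC (P : Finset ℂ) : Type := {π : Finpartition P // IsNoncrossing π}

/-- The blocks of a noncrossing partition. -/
def NC.parts {P : Finset ℂ} (π : NC P) : Finset (Finset ℂ) := π.1.parts

/-- Two points lie in a common block of a noncrossing partition. -/
def NC.SameBlock {P : Finset ℂ} (π : NC P) (a b : ℂ) : Prop :=
  ∃ B ∈ π.parts, a ∈ B ∧ b ∈ B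

/-- The real point `x_k = -1 + 2k/(m+1)` of the semicircular configuration `S_{m,n}`. -/
noncomputable def Sx (m k : ℕ) : ℂ := -1 + 2 * (k : ℂ) / ((m : ℂ) + 1)

/-- The circle point `y_j = exp(iπj/(n+1))` of the semicircular configuration `S_{m,n}`. -/
noncomputable def Sy (n j : ℕ) : ℂ :=
  Complex.exp ((Real.pi : ℂ) * (j : ℂ) / ((n : ℂ) + 1) * Complex.I)

/-- The semicircular configuration `S_{m,n}`: the `m+2` real points
`x_k = -1 + 2k/(m+1)` for `k = 0, …, m+1` (including the endpoints `±1`) together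
with the `n` points `y_j = exp(iπj/(n+1))` for `j = 1, …, n` on the open upper
unit semicircle. -/
noncomputable def Sconfig (m n : ℕ) : Finset ℂ :=
  ((Finset.range (m + 2)).image fun k : ℕ => Sx m k) ∪
    ((Finset.Icc 1 n).image fun j : ℕ => Sy n j)

/-- The bivariate generating function `S(X,Y) = Σ s_{m,n} X^m Y^n` in `ℤ⟦X,Y⟧`, where
`s_{m,n} = |NC(S_{m,n})|`, the variable `X` is `MvPowerSeries.X 0` and `Y` is
`MvPowerSeries.X 1`. -/
noncomputable def Sseries : MvPowerSeries (Fin 2) ℤ :=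
  fun d => (Nat.card (NC (Sconfig (d 0) (d 1))) : ℤ)

/-- The Catalan generating function `C(Y) = Σ C_n Y^n`, viewed in `ℤ⟦X,Y⟧` as a power
series in the variable `Y = MvPowerSeries.X 1` alone. -/
noncomputable def Cseries : MvPowerSeries (Fin 2) ℤ :=
  fun d => if d 0 = 0 then (catalan (d 1) : ℤ) else 0

/-! ### Label functions -/

/-- Label functions of noncrossing partitions of `{0,…,N-1}` whose blocks meet `{0,…,k-1}` in
intervals: every point is sent to the minimum of its block. -/
def LabSet (k N : ℕ) : Set (ℕ → ℕ) :=
  {f | (∀ a, f a ≤ a) ∧ (∀ a, N ≤ a → f a = a) ∧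
    (∀ b c, f c ≤ b → b ≤ c → f c ≤ f b) ∧
    (∀ b c, c < k → f c ≤ b → b ≤ c → f b ≤ f c)}

lemma LabSet_finite (k N : ℕ) : (LabSet k N).Finite := by
  have : Finite (LabSet k N) := by
    refine Finite.of_injective
      (fun f : LabSet k N => (fun i : Fin N => (⟨f.1 i, lt_of_le_of_lt (f.2.1 i) i.2⟩ : Fin N))) ?_
    intro f g h
    apply Subtype.ext
    funext a
    by_cases ha : a < N
    · have := congrFun h ⟨a, ha⟩
      simpa using this
    · rw [f.2.2.1 a (by omega), g.2.2.1 a (by omega)]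
  exact Set.toFinite _

noncomputable def Lab (k N : ℕ) : Finset (ℕ → ℕ) := (LabSet_finite k N).toFinset

lemma mem_Lab {k N : ℕ} {f : ℕ → ℕ} : f ∈ Lab k N ↔ (∀ a, f a ≤ a) ∧ (∀ a, N ≤ a → f a = a) ∧
    (∀ b c, f c ≤ b → b ≤ c → f c ≤ f b) ∧
    (∀ b c, c < k → f c ≤ b → b ≤ c → f b ≤ f c) := by
  simp [Lab, LabSet]

lemma Lab_zero_eq_one (N : ℕ) : Lab 0 N = Lab 1 N := by
  ext f
  rw [mem_Lab, mem_Lab]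
  constructor
  · rintro ⟨h1, h2, h3, h4⟩
    refine ⟨h1, h2, h3, ?_⟩
    intro b c hc _ hb
    have : b = c := by omega
    simp [this]
  · rintro ⟨h1, h2, h3, h4⟩
    exact ⟨h1, h2, h3, fun b c hc => by omega⟩

lemma Lab_of_le {k N : ℕ} (h : N ≤ k) : Lab k N = Lab N N := by
  ext f
  rw [mem_Lab, mem_Lab]
  constructor
  · rintro ⟨h1, h2, h3, h4⟩
    exact ⟨h1, h2, h3, fun b c hc => h4 b c (by omega)⟩
  · rintro ⟨h1, h2, h3, h4⟩
    refine ⟨h1, h2, h3, fun b c hc hb hbc => ?_⟩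
    by_cases hcN : c < N
    · exact h4 b c hcN hb hbc
    · have := h2 c (by omega)
      have : b = c := by omega
      simp [this]

lemma card_Lab_zero (k : ℕ) : (Lab k 0).card = 1 := by
  rw [Finset.card_eq_one]
  refine ⟨id, ?_⟩
  ext f
  rw [mem_Lab, Finset.mem_singleton]
  constructor
  · rintro ⟨_, h2, _, _⟩
    funext a
    exact h2 a (Nat.zero_le _)
  · rintro rfl
    exact ⟨fun _ => le_rfl, fun _ _ => rfl, fun b c h _ => h, fun b c _ _ h => h⟩

/-- Left part. -/
def labL (v : ℕ) (f : ℕ → ℕ) : ℕ → ℕ := fun a => if a < v then f a else a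
/-- Right part. -/
def labR (v M : ℕ) (f : ℕ → ℕ) : ℕ → ℕ := fun a => if a < M then f (a + v) - v else a
/-- Gluing. -/
def labG (v N : ℕ) (g h : ℕ → ℕ) : ℕ → ℕ := fun a =>
  if a < v then g a else if a < N then h (a - v) + v else if a = N then v else a

lemma card_Lab_succ {k N : ℕ} (hk : k ≤ N) :
    (Lab k (N + 1)).card =
      ∑ v ∈ Finset.range (N + 1), (Lab k v).card * (Lab (k - v) (N - v)).card := by
  have hmaps : ∀ f ∈ Lab k (N + 1), f N ∈ Finset.range (N + 1) := by
    intro f hf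
    rw [mem_Lab] at hf
    have := hf.1 N
    simp; omega
  rw [Finset.card_eq_sum_card_fiberwise hmaps]
  refine Finset.sum_congr rfl fun v hv => ?_
  have hvN : v ≤ N := by simp at hv; omega
  rw [← Finset.card_product]
  refine Finset.card_nbij' (fun f => (labL v f, labR v (N - v) f)) (fun p => labG v N p.1 p.2)
    ?_ ?_ ?_ ?_
  · intro f hf
    simp only [Finset.coe_filter, Set.mem_ofPred_eq, mem_Lab] at hf
    obtain ⟨⟨h1, h2, h3, h4⟩, hv⟩ := hf
    have key : ∀ a, v ≤ a → a < N → v ≤ f a := fun a ha ha' => by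
      have := h3 a N (by omega) (by omega); omega
    simp only [Finset.coe_product, Set.mem_prod, Finset.mem_coe, mem_Lab]
    refine ⟨⟨?_, ?_, ?_, ?_⟩, ⟨?_, ?_, ?_, ?_⟩⟩
    · intro a; unfold labL; split_ifs
      exacts [h1 a, le_rfl]
    · intro a ha; unfold labL; rw [if_neg (by omega)]
    · intro b c; unfold labL; have := h3 b c; split_ifs <;> omega
    · intro b c; unfold labL; have := h4 b c; split_ifs <;> omega
    · intro a; unfold labR; have := h1 (a + v); split_ifs <;> omega
    · intro a ha; unfold labR; rw [if_neg (by omega)]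
    · intro b c; unfold labR; have := h3 (b + v) (c + v); have := key (c + v); split_ifs <;> omega
    · intro b c; unfold labR; have := h4 (b + v) (c + v); have := key (c + v); split_ifs <;> omega
  · intro p hp
    obtain ⟨g, h⟩ := p
    simp only [Finset.coe_product, Set.mem_prod, Finset.mem_coe, mem_Lab] at hp
    obtain ⟨⟨g1, g2, g3, g4⟩, ⟨h1, h2, h3, h4⟩⟩ := hp
    simp only [Finset.coe_filter, Set.mem_ofPred_eq, mem_Lab]
    refine ⟨⟨?_, ?_, ?_, ?_⟩, ?_⟩
    · intro a; unfold labG; have := g1 a; have := h1 (a - v); split_ifs <;> omega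
    · intro a ha; unfold labG; rw [if_neg (by omega), if_neg (by omega), if_neg (by omega)]
    · intro b c; unfold labG; have := g3 b c; have := h3 (b - v) (c - v); have := g1 b
      have := g1 c; have := h1 (b - v)
      split_ifs <;> omega
    · intro b c; unfold labG; have := g4 b c; have := h4 (b - v) (c - v); have := g1 b
      have := g1 c; have := h1 (b - v)
      split_ifs <;> omega
    · unfold labG; rw [if_neg (by omega), if_neg (by omega), if_pos rfl]
  · intro f hf
    simp only [Finset.coe_filter, Set.mem_ofPred_eq, mem_Lab] at hf
    obtain ⟨⟨h1, h2, h3, h4⟩, hv⟩ := hf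
    have key : ∀ a, v ≤ a → a < N → v ≤ f a := fun a ha ha' => by
      have := h3 a N (by omega) (by omega); omega
    funext a
    simp only [labG, labL, labR]
    split_ifs with i1 i2 _ i3
    · rfl
    · have := key a (by omega) i2
      have e : a - v + v = a := by omega
      rw [e]; omega
    · omega
    · rw [i3, hv]
    · rw [h2 a (by omega)]
  · intro p hp
    obtain ⟨g, h⟩ := p
    simp only [Finset.coe_product, Set.mem_prod, Finset.mem_coe, mem_Lab] at hp
    obtain ⟨⟨g1, g2, g3, g4⟩, ⟨h1, h2, h3, h4⟩⟩ := hp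
    refine Prod.ext ?_ ?_
    · funext a
      simp only [labG, labL]
      split_ifs with i1
      · rfl
      · rw [g2 a (by omega)]
    · funext a
      simp only [labG, labR]
      by_cases i1 : a < N - v
      · rw [if_pos i1, if_neg (by omega), if_pos (by omega)]; simp
      · rw [if_neg i1, h2 a (by omega)]

lemma card_Lab_self (N : ℕ) : (Lab (N + 1) (N + 1)).card = 2 ^ N := by
  induction N with
  | zero => 
    rw [zero_add, ← Lab_zero_eq_one, card_Lab_succ le_rfl]
    simp [card_Lab_zero]
  | succ N ih =>
    have hA : ((Lab (N + 2) (N + 2)).filter (fun f => f (N + 1) = N + 1)).card = 2 ^ N := by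
      rw [← ih]
      refine Finset.card_nbij' id id ?_ ?_ (fun _ _ => rfl) (fun _ _ => rfl)
      · intro f hf
        simp only [Finset.coe_filter, Set.mem_ofPred_eq, mem_Lab] at hf
        obtain ⟨⟨h1, h2, h3, h4⟩, hv⟩ := hf
        simp only [Finset.mem_coe, mem_Lab, id]
        refine ⟨h1, ?_, h3, fun b c hc => h4 b c (by omega)⟩
        intro a ha
        rcases Nat.lt_or_ge a (N + 2) with h | h
        · rw [show a = N + 1 by omega, hv]
        · exact h2 a h
      · intro f hf
        simp only [Finset.mem_coe, mem_Lab] at hf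
        obtain ⟨h1, h2, h3, h4⟩ := hf
        simp only [Finset.coe_filter, Set.mem_ofPred_eq, mem_Lab, id]
        refine ⟨⟨h1, fun a ha => h2 a (by omega), h3, ?_⟩, h2 _ le_rfl⟩
        intro b c
        have := h4 b c
        have := h2 c
        have := h1 b
        omega
    have hB : ((Lab (N + 2) (N + 2)).filter (fun f => ¬ f (N + 1) = N + 1)).card = 2 ^ N := by
      rw [← ih]
      refine Finset.card_nbij' (fun f a => if a = N + 1 then a else f a)
        (fun f a => if a = N + 1 then f N else f a) ?_ ?_ ?_ ?_
      · intro f hf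
        simp only [Finset.coe_filter, Set.mem_ofPred_eq, mem_Lab] at hf
        obtain ⟨⟨h1, h2, h3, h4⟩, hv⟩ := hf
        simp only [Finset.mem_coe, mem_Lab]
        refine ⟨?_, ?_, ?_, ?_⟩
        · intro a; have := h1 a; split_ifs <;> omega
        · intro a ha; have := h2 a; split_ifs <;> omega
        · intro b c; have := h3 b c; have := h2 c; split_ifs <;> omega
        · intro b c; have := h4 b c; have := h2 c; split_ifs <;> omega
      · intro f hf
        simp only [Finset.mem_coe, mem_Lab] at hf
        obtain ⟨h1, h2, h3, h4⟩ := hf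
        simp only [Finset.coe_filter, Set.mem_ofPred_eq, mem_Lab]
        have hN := h1 N
        refine ⟨⟨?_, ?_, ?_, ?_⟩, ?_⟩
        · intro a; have := h1 a; split_ifs <;> omega
        · intro a ha; have := h2 a; split_ifs <;> omega
        · intro b c; have := h3 b c; have := h2 c; have := h3 b N; split_ifs <;> omega
        · intro b c; have := h4 b c; have := h2 c; have := h4 b N; have := h1 b
          split_ifs <;> omega
        · simp; omega
      · intro f hf
        simp only [Finset.coe_filter, Set.mem_ofPred_eq, mem_Lab] at hf
        obtain ⟨⟨h1, h2, h3, h4⟩, hv⟩ := hf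
        funext a
        have := h4 N (N + 1) (by omega) (by have := h1 (N + 1); omega) (by omega)
        have := h3 N (N + 1) (by have := h1 (N + 1); omega) (by omega)
        simp only
        split_ifs with i1 i2
        · omega
        · rw [i1]; omega
        · rfl
      · intro f hf
        simp only [Finset.mem_coe, mem_Lab] at hf
        obtain ⟨h1, h2, h3, h4⟩ := hf
        funext a
        have := h2 a
        simp only
        split_ifs <;> omega
    rw [← Finset.card_filter_add_card_filter_not (fun f : ℕ → ℕ => f (N + 1) = N + 1), hA, hB]
    ring

/-! ### Generating functions in one variable -/

lemma card_Lab_catalan (N : ℕ) : (Lab 0 N).card = catalan N := by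
  induction N using Nat.strong_induction_on with
  | _ N ih =>
    rcases N with _ | N
    · simp [card_Lab_zero]
    · rw [card_Lab_succ (Nat.zero_le _), catalan_succ, Finset.sum_range]
      refine Finset.sum_congr rfl fun i _ => ?_
      rw [Nat.zero_sub, ih i (by omega), ih (N - i) (by omega)]

noncomputable def Fser (k : ℕ) : PowerSeries ℤ := PowerSeries.mk fun n => ((Lab k (k + n)).card : ℤ)

noncomputable def Cser : PowerSeries ℤ := PowerSeries.mk fun n => (catalan n : ℤ)

lemma Fser_zero : Fser 0 = Cser := by
  ext n; simp [Fser, Cser, card_Lab_catalan]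

lemma Cser_eq : Cser = 1 + PowerSeries.X * (Cser * Cser) := by
  ext n
  rcases n with _ | n
  · simp [Cser]
  · rw [map_add, PowerSeries.coeff_succ_X_mul, PowerSeries.coeff_mul]
    simp [Cser, catalan_succ', PowerSeries.coeff_one]

lemma Fser_rec (k : ℕ) : Fser k = PowerSeries.C ((Lab k k).card : ℤ) +
    PowerSeries.X * (∑ v ∈ Finset.range k, PowerSeries.C ((Lab v v).card : ℤ) * Fser (k - v)) +
    PowerSeries.X * (Fser k * Cser) := by
  ext n
  rcases n with _ | n
  · simp [Fser]
  · rw [map_add, map_add, PowerSeries.coeff_succ_X_mul, PowerSeries.coeff_succ_X_mul, map_sum,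
      PowerSeries.coeff_mul]
    simp only [PowerSeries.coeff_C_mul]
    simp only [Fser, Cser, PowerSeries.coeff_mk, PowerSeries.coeff_C]
    rw [← add_assoc, card_Lab_succ (by omega), add_assoc k n 1, Finset.sum_range_add]
    rw [Finset.Nat.sum_antidiagonal_eq_sum_range_succ_mk]
    push_cast
    simp only [Nat.add_eq_zero_iff, one_ne_zero, and_false, if_false, zero_add]
    congr 1
    · refine Finset.sum_congr rfl fun v hv => ?_
      have hv := Finset.mem_range.1 hv
      rw [Lab_of_le (k := k) (N := v) hv.le, show k - v + n = k + n - v by omega]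
    · refine Finset.sum_congr rfl fun v hv => ?_
      rw [show k - (k + v) = 0 by omega, show k + n - (k + v) = n - v by omega, card_Lab_catalan]

lemma Fser_succ (k : ℕ) : Fser (k + 2) = (1 + Cser) * Fser (k + 1) := by
  have h1 := Fser_rec (k + 1)
  have h2 := Fser_rec (k + 2)
  rw [Finset.sum_range_succ'] at h1
  rw [Finset.sum_range_succ', Finset.sum_range_succ'] at h2
  have hs : ∑ v ∈ Finset.range k, PowerSeries.C ((Lab (v + 1 + 1) (v + 1 + 1)).card : ℤ) *
        Fser (k + 2 - (v + 1 + 1)) =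
      2 * ∑ v ∈ Finset.range k, PowerSeries.C ((Lab (v + 1) (v + 1)).card : ℤ) *
        Fser (k + 1 - (v + 1)) := by
    rw [Finset.mul_sum]
    refine Finset.sum_congr rfl fun v hv => ?_
    rw [card_Lab_self, card_Lab_self, show k + 2 - (v + 1 + 1) = k + 1 - (v + 1) by omega, pow_succ]
    push_cast
    rw [map_mul]
    have : (PowerSeries.C (2 : ℤ)) = 2 := map_ofNat _ 2
    rw [this]; ring
  rw [hs] at h2
  have hp : (PowerSeries.C ((Lab (k + 2) (k + 2)).card : ℤ)) =
      2 * PowerSeries.C ((Lab (k + 1) (k + 1)).card : ℤ) := by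
    rw [card_Lab_self, card_Lab_self, pow_succ]
    push_cast
    rw [map_mul]
    have : (PowerSeries.C (2 : ℤ)) = 2 := map_ofNat _ 2
    rw [this]; ring
  rw [hp] at h2
  simp only [zero_add, card_Lab_self 0, card_Lab_zero, Nat.sub_zero, pow_zero, Nat.cast_one,
    map_one, one_mul, Nat.add_sub_cancel] at h1 h2
  rw [show k + 2 - 1 = k + 1 by omega] at h2
  set T := ∑ v ∈ Finset.range k, PowerSeries.C ((Lab (v + 1) (v + 1)).card : ℤ) *
        Fser (k + 1 - (v + 1))
  have hne : (1 - PowerSeries.X - PowerSeries.X * Cser : PowerSeries ℤ) ≠ 0 := by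
    intro h
    have := congrArg (PowerSeries.constantCoeff (R := ℤ)) h
    simp at this
  apply mul_left_cancel₀ hne
  have hC := Cser_eq
  linear_combination h2 - 2 * h1 - Fser (k + 1) * hC

lemma card_Lab_rec (m n : ℕ) : ((Lab (m + 3) (m + 3 + n)).card : ℤ) = (Lab (m + 2) (m + 2 + n)).card +
    ∑ p ∈ Finset.HasAntidiagonal.antidiagonal n, (catalan p.1 : ℤ) * (Lab (m + 2) (m + 2 + p.2)).card := by
  have := congrArg (PowerSeries.coeff n) (Fser_succ (m + 1))
  rw [add_mul, one_mul, map_add, PowerSeries.coeff_mul] at this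
  simpa [Fser, Cser] using this

lemma card_Lab_two (n : ℕ) : (Lab 2 (2 + n)).card = catalan (n + 2) := by
  have h1 : Fser 1 * PowerSeries.X = Cser - 1 := by
    ext n
    rcases n with _ | n
    · simp [Cser]
    · rw [PowerSeries.coeff_succ_mul_X]
      simp [Cser, Fser, ← Lab_zero_eq_one, card_Lab_catalan, PowerSeries.coeff_one, add_comm]
  have h2 := Fser_succ 0
  have h3 : Fser 2 * PowerSeries.X ^ 2 = Cser - 1 - PowerSeries.X := by
    have := Cser_eq
    simp only [zero_add] at h2
    linear_combination PowerSeries.X ^ 2 * h2 + PowerSeries.X * (1 + Cser) * h1 - this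
  have h4 := congrArg (PowerSeries.coeff (n + 2)) h3
  rw [PowerSeries.coeff_mul_X_pow] at h4
  simp [Fser, Cser, PowerSeries.coeff_one, PowerSeries.coeff_X] at h4
  exact_mod_cast h4

lemma coeff_Cseries_mul (φ : MvPowerSeries (Fin 2) ℤ) (g : ℕ → ℕ → ℤ)
    (hφ : ∀ d, MvPowerSeries.coeff d φ = g (d 0) (d 1)) (d : Fin 2 →₀ ℕ) :
    MvPowerSeries.coeff d (Cseries * φ) =
      ∑ p ∈ Finset.HasAntidiagonal.antidiagonal (d 1), (catalan p.1 : ℤ) * g (d 0) p.2 := by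
  classical
  rw [MvPowerSeries.coeff_mul]
  have hC : ∀ d, MvPowerSeries.coeff d Cseries = if d 0 = 0 then (catalan (d 1) : ℤ) else 0 :=
    fun d => rfl
  simp only [hC, hφ, ite_mul, zero_mul]
  rw [← Finset.sum_filter]
  refine Finset.sum_nbij' (fun p => (p.1 1, p.2 1))
    (fun q => (Finsupp.single 1 q.1, Finsupp.single 0 (d 0) + Finsupp.single 1 q.2)) ?_ ?_ ?_ ?_ ?_
  · intro p hp
    simp only [Finset.mem_filter, Finset.HasAntidiagonal.mem_antidiagonal] at hp ⊢
    rw [← hp.1]; rfl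
  · intro q hq
    simp only [Finset.mem_filter, Finset.HasAntidiagonal.mem_antidiagonal] at hq ⊢
    refine ⟨?_, by simp⟩
    ext i
    fin_cases i
    · simp
    · simpa using hq
  · intro p hp
    simp only [Finset.mem_filter, Finset.HasAntidiagonal.mem_antidiagonal] at hp
    have h0 : p.1 0 + p.2 0 = d 0 := by rw [← hp.1]; rfl
    refine Prod.ext ?_ ?_
    · ext i
      fin_cases i
      · simp [hp.2]
      · simp
    · ext i
      fin_cases i
      · simp; omega
      · simp
  · intro q hq
    simp
  · intro p hp
    simp only [Finset.mem_filter, Finset.HasAntidiagonal.mem_antidiagonal] at hp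
    have h0 : p.1 0 + p.2 0 = d 0 := by rw [← hp.1]; rfl
    simp only
    rw [show p.2 0 = d 0 by omega]

lemma coeff_add_X_mul (s : Fin 2) (φ : MvPowerSeries (Fin 2) ℤ) (e : Fin 2 →₀ ℕ) :
    MvPowerSeries.coeff (e + Finsupp.single s 1) (MvPowerSeries.X s * φ) =
      MvPowerSeries.coeff e φ := by
  rw [MvPowerSeries.X_def, add_comm, MvPowerSeries.coeff_add_monomial_mul, one_mul]

lemma coeff_X_mul_of_zero (s : Fin 2) (φ : MvPowerSeries (Fin 2) ℤ) (d : Fin 2 →₀ ℕ) (h : d s = 0) :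
    MvPowerSeries.coeff d (MvPowerSeries.X s * φ) = 0 := by
  classical
  rw [MvPowerSeries.X_def, MvPowerSeries.coeff_monomial_mul, if_neg]
  intro hle
  have := hle s
  simp [h] at this

noncomputable def S0series : MvPowerSeries (Fin 2) ℤ :=
  fun d => if d 0 = 0 then (catalan (d 1 + 2) : ℤ) else 0

lemma exists_add_single (d : Fin 2 →₀ ℕ) (s : Fin 2) (h : d s ≠ 0) :
    ∃ e : Fin 2 →₀ ℕ, d = e + Finsupp.single s 1 := by
  refine ⟨d - Finsupp.single s 1, ?_⟩
  rw [tsub_add_cancel_of_le]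
  rw [Finsupp.single_le_iff]
  omega

lemma Y_S0series : MvPowerSeries.X 1 * (MvPowerSeries.X 1 * S0series) =
    Cseries - 1 - MvPowerSeries.X 1 := by
  classical
  ext d
  have hC : ∀ d, MvPowerSeries.coeff d Cseries = if d 0 = 0 then (catalan (d 1) : ℤ) else 0 :=
    fun d => rfl
  have hS : ∀ d, MvPowerSeries.coeff d S0series =
    if d 0 = 0 then (catalan (d 1 + 2) : ℤ) else 0 := fun d => rfl
  rw [map_sub, map_sub, hC, MvPowerSeries.coeff_one, MvPowerSeries.coeff_X]
  have e1 : d = 0 ↔ d 0 = 0 ∧ d 1 = 0 := by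
    rw [Finsupp.ext_iff, Fin.forall_fin_two]; simp
  have e2 : d = Finsupp.single 1 1 ↔ d 0 = 0 ∧ d 1 = 1 := by
    rw [Finsupp.ext_iff, Fin.forall_fin_two]; simp
  simp only [e1, e2]
  by_cases h1 : d 1 = 0
  · rw [coeff_X_mul_of_zero _ _ _ h1]
    simp [h1]
  · obtain ⟨e, rfl⟩ := exists_add_single d 1 h1
    rw [coeff_add_X_mul]
    by_cases h2 : e 1 = 0
    · rw [coeff_X_mul_of_zero _ _ _ h2]
      simp [h2]
    · obtain ⟨e, rfl⟩ := exists_add_single e 1 h2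
      rw [coeff_add_X_mul, hS]
      simp

lemma Sseries_final (hcard : ∀ m n, Nat.card (NC (Sconfig m n)) = (Lab (m + 2) (m + 2 + n)).card) :
    MvPowerSeries.X 1 ^ 2 * (1 - MvPowerSeries.X 0 * (1 + Cseries)) * Sseries =
      Cseries - 1 - MvPowerSeries.X 1 := by
  have hS : ∀ d, MvPowerSeries.coeff d Sseries =
      (fun m n => ((Lab (m + 2) (m + 2 + n)).card : ℤ)) (d 0) (d 1) := fun d => by
    change ((Nat.card (NC (Sconfig (d 0) (d 1)))  : ℕ) : ℤ) = _
    rw [hcard]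
  have key : Sseries = S0series + MvPowerSeries.X 0 * (Sseries + Cseries * Sseries) := by
    ext d
    rw [map_add]
    have hS0 : ∀ d, MvPowerSeries.coeff d S0series =
      if d 0 = 0 then (catalan (d 1 + 2) : ℤ) else 0 := fun d => rfl
    by_cases h0 : d 0 = 0
    · rw [coeff_X_mul_of_zero _ _ _ h0, hS, hS0]
      simp [h0, card_Lab_two]
    · obtain ⟨e, rfl⟩ := exists_add_single d 0 h0
      rw [coeff_add_X_mul, map_add, coeff_Cseries_mul Sseries (fun m n => ((Lab (m + 2) (m + 2 + n)).card : ℤ)) hS, hS, hS, hS0]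
      simp [card_Lab_rec]
  have := Y_S0series
  linear_combination MvPowerSeries.X 1 ^ 2 * key + this

/-! ### Geometry -/

/-- Orientation determinant. -/
def orient (p q r : ℂ) : ℝ := (q.re - p.re) * (r.im - p.im) - (q.im - p.im) * (r.re - p.re)

lemma orient_circle {α β γ : ℝ} (h1 : α < β) (h2 : β < γ) (h3 : γ - α < 2 * Real.pi) :
    0 < orient (⟨Real.cos α, Real.sin α⟩) (⟨Real.cos β, Real.sin β⟩) (⟨Real.cos γ, Real.sin γ⟩) := by
  obtain ⟨s, hs⟩ : ∃ s, s = (β - α) / 2 := ⟨_, rfl⟩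
  obtain ⟨t, ht⟩ : ∃ t, t = (γ - β) / 2 := ⟨_, rfl⟩
  have hβ : β = α + 2 * s := by linarith
  have hγ : γ = α + 2 * s + 2 * t := by linarith
  have e : orient (⟨Real.cos α, Real.sin α⟩) (⟨Real.cos β, Real.sin β⟩)
      (⟨Real.cos γ, Real.sin γ⟩) = 4 * Real.sin s * Real.sin t * Real.sin (s + t) := by
    have e1 : orient (⟨Real.cos α, Real.sin α⟩) (⟨Real.cos β, Real.sin β⟩)
      (⟨Real.cos γ, Real.sin γ⟩) = Real.sin (β - α) + Real.sin (γ - β) - Real.sin (γ - α) := by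
      simp only [orient, Real.sin_sub]; ring
    rw [e1, show β - α = 2 * s by linarith, show γ - β = 2 * t by linarith,
      show γ - α = 2 * s + 2 * t by linarith, Real.sin_add (2 * s), Real.sin_two_mul,
      Real.sin_two_mul, Real.cos_two_mul, Real.cos_two_mul, Real.sin_add]
    have a1 := Real.sin_sq_add_cos_sq s
    have a2 := Real.sin_sq_add_cos_sq t
    linear_combination (-4 * Real.sin t * Real.cos t) * a1 + (-4 * Real.sin s * Real.cos s) * a2
  rw [e]
  have p1 : 0 < Real.sin s := Real.sin_pos_of_pos_of_lt_pi (by linarith) (by linarith)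
  have p2 : 0 < Real.sin t := Real.sin_pos_of_pos_of_lt_pi (by linarith) (by linarith)
  have p3 : 0 < Real.sin (s + t) := Real.sin_pos_of_pos_of_lt_pi (by linarith) (by linarith)
  positivity

/-- The points of the configuration, in counterclockwise order. -/
noncomputable def pt (m n i : ℕ) : ℂ := if i < m + 2 then Sx m i else Sy n (i - (m + 1))

lemma Sx_re (m k : ℕ) : (Sx m k).re = -1 + 2 * (k : ℝ) / ((m : ℝ) + 1) := by
  have : Sx m k = ((-1 + 2 * (k : ℝ) / ((m : ℝ) + 1) : ℝ) : ℂ) := by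
    simp [Sx]
  rw [this, Complex.ofReal_re]

lemma Sx_im (m k : ℕ) : (Sx m k).im = 0 := by
  have : Sx m k = ((-1 + 2 * (k : ℝ) / ((m : ℝ) + 1) : ℝ) : ℂ) := by
    simp [Sx]
  rw [this, Complex.ofReal_im]

noncomputable def ang (n j : ℕ) : ℝ := Real.pi * j / (n + 1)

lemma Sy_eq (n j : ℕ) : Sy n j = ⟨Real.cos (ang n j), Real.sin (ang n j)⟩ := by
  have : Sy n j = Complex.exp ((ang n j : ℝ) * Complex.I) := by
    simp [Sy, ang]
  rw [this]
  apply Complex.ext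
  · simp [Complex.exp_ofReal_mul_I_re]
  · simp [Complex.exp_ofReal_mul_I_im]

lemma ang_lt {n i j : ℕ} (h : i < j) : ang n i < ang n j := by
  unfold ang
  have : (i : ℝ) < j := by exact_mod_cast h
  have := Real.pi_pos
  gcongr

lemma ang_pos {n j : ℕ} (h : 0 < j) : 0 < ang n j := by
  have := ang_lt (n := n) h
  simpa [ang] using this

lemma ang_lt_pi {n j : ℕ} (h : j ≤ n) : ang n j < Real.pi := by
  have := ang_lt (n := n) (Nat.lt_succ_of_le h)
  have e : ang n (n + 1) = Real.pi := by
    unfold ang; push_cast; field_simp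
  rwa [Nat.succ_eq_add_one, e] at this

lemma Sx_re_lt {m i j : ℕ} (h : i < j) : (Sx m i).re < (Sx m j).re := by
  rw [Sx_re, Sx_re]
  have : (i : ℝ) < j := by exact_mod_cast h
  gcongr

lemma Sx_re_ge (m i : ℕ) : -1 ≤ (Sx m i).re := by
  rw [Sx_re]
  have : 0 ≤ 2 * (i : ℝ) / ((m : ℝ) + 1) := by positivity
  linarith

lemma Sx_re_le {m i : ℕ} (h : i < m + 2) : (Sx m i).re ≤ 1 := by
  rw [Sx_re]
  have : 2 * (i : ℝ) / ((m : ℝ) + 1) ≤ 2 := by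
    rw [div_le_iff₀ (by positivity)]
    have : (i : ℝ) ≤ m + 1 := by exact_mod_cast Nat.le_of_lt_succ h
    linarith
  linarith

lemma Sy_im_pos {n j : ℕ} (h : 0 < j) (h' : j ≤ n) : 0 < (Sy n j).im := by
  rw [Sy_eq]
  exact Real.sin_pos_of_pos_of_lt_pi (ang_pos h) (ang_lt_pi h')

lemma orient_pos {m n i j l : ℕ} (hij : i < j) (hjl : j < l) (hl : l < m + 2 + n)
    (hr : m + 2 ≤ l) : 0 < orient (pt m n i) (pt m n j) (pt m n l) := by
  have el : pt m n l = Sy n (l - (m + 1)) := by rw [pt, if_neg (by omega)]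
  by_cases hj : j < m + 2
  · have ei : pt m n i = Sx m i := by rw [pt, if_pos (by omega)]
    have ej : pt m n j = Sx m j := by rw [pt, if_pos (by omega)]
    rw [ei, ej, el, orient, Sx_im, Sx_im]
    have h1 := Sx_re_lt (m := m) hij
    have h2 : 0 < (Sy n (l - (m + 1))).im := Sy_im_pos (by omega) (by omega)
    have := mul_pos (sub_pos.2 h1) h2
    linarith
  · have ej : pt m n j = Sy n (j - (m + 1)) := by rw [pt, if_neg (by omega)]
    have hjl' : ang n (j - (m + 1)) < ang n (l - (m + 1)) := ang_lt (by omega)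
    have hl' : ang n (l - (m + 1)) < Real.pi := ang_lt_pi (by omega)
    have hj' : 0 < ang n (j - (m + 1)) := ang_pos (by omega)
    rw [ej, el, Sy_eq, Sy_eq]
    by_cases hi : i < m + 2
    · have ei : pt m n i = Sx m i := by rw [pt, if_pos (by omega)]
      rw [ei]
      have h1 := orient_circle hj' hjl' (by linarith)
      have h2 := orient_circle hjl' hl' (by linarith)
      have h3 := Sx_re_ge m i
      have h4 := Sx_re_le hi
      simp only [orient, Real.cos_zero, Real.sin_zero, Real.cos_pi, Real.sin_pi, Sx_im] at h1 h2 ⊢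
      generalize (Sx m i).re = x at *
      by_cases hx : x = -1
      · subst hx; linarith
      · have : -1 < x := lt_of_le_of_ne h3 (Ne.symm hx)
        have a1 := mul_pos (show 0 < 1 + x by linarith) h1
        have a2 := mul_nonneg (show 0 ≤ 1 - x by linarith) h2.le
        linarith
    · have ei : pt m n i = Sy n (i - (m + 1)) := by rw [pt, if_neg (by omega)]
      rw [ei, Sy_eq]
      have hi' : 0 < ang n (i - (m + 1)) := ang_pos (by omega)
      exact orient_circle (ang_lt (by omega)) hjl' (by linarith)

lemma pt_im_zero {m n i : ℕ} (h : i < m + 2) : (pt m n i).im = 0 := by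
  rw [pt, if_pos h, Sx_im]

lemma pt_im_pos {m n i : ℕ} (h : m + 2 ≤ i) (h' : i < m + 2 + n) : 0 < (pt m n i).im := by
  rw [pt, if_neg (by omega)]
  exact Sy_im_pos (by omega) (by omega)

lemma pt_re_lt {m n i j : ℕ} (h : i < j) (h' : j < m + 2) : (pt m n i).re < (pt m n j).re := by
  rw [pt, if_pos (by omega), pt, if_pos h']
  exact Sx_re_lt h

lemma orient_nonneg {m n i j l : ℕ} (hij : i < j) (hjl : j < l) (hl : l < m + 2 + n) :
    0 ≤ orient (pt m n i) (pt m n j) (pt m n l) := by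
  by_cases hr : m + 2 ≤ l
  · exact (orient_pos hij hjl hl hr).le
  · rw [orient, pt_im_zero (by omega), pt_im_zero (by omega), pt_im_zero (by omega)]
    simp

lemma pt_ne_of_lt {m n i j : ℕ} (h : i < j) (hj : j < m + 2 + n) : pt m n i ≠ pt m n j := by
  intro he
  by_cases hr : m + 2 ≤ j
  · rcases Nat.eq_zero_or_pos i with rfl | hi
    · have := orient_pos (m := m) (n := n) (i := 0) (j := 1) (l := j) (by omega) (by omega) hj hr
      rw [← he] at this
      simp [orient] at this
    · have := orient_pos (m := m) (n := n) (i := 0) (j := i) (l := j) (by omega) (by omega) hj hr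
      rw [← he] at this
      simp only [orient] at this
      linarith
  · have := pt_re_lt (n := n) h (by omega : j < m + 2)
    rw [he] at this
    exact lt_irrefl _ this

lemma pt_inj {m n i j : ℕ} (hi : i < m + 2 + n) (hj : j < m + 2 + n) (h : pt m n i = pt m n j) :
    i = j := by
  rcases Nat.lt_trichotomy i j with h1 | h1 | h1
  · exact absurd h (pt_ne_of_lt h1 hj)
  · exact h1
  · exact absurd h.symm (pt_ne_of_lt h1 hi)

lemma pt_normSq_le {m n i : ℕ} : (pt m n i).re ^ 2 + (pt m n i).im ^ 2 ≤ 1 := by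
  by_cases h : i < m + 2
  · rw [pt_im_zero h, pt, if_pos h]
    have := Sx_re_ge m i
    have := Sx_re_le h
    nlinarith
  · rw [pt, if_neg h, Sy_eq]
    simp

lemma pt_normSq_eq {m n i : ℕ} (h : m + 2 ≤ i) : (pt m n i).re ^ 2 + (pt m n i).im ^ 2 = 1 := by
  rw [pt, if_neg (by omega), Sy_eq]
  simp

/-- Two crossing chords meet. -/
lemma cross_meet {a b c d : ℂ} (h1 : 0 ≤ orient b c d) (h2 : 0 ≤ orient a b d)
    (h4 : 0 ≤ orient a b c) (hpos : 0 < orient a c d) :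
    ∃ z, z ∈ segment ℝ a c ∧ z ∈ segment ℝ b d := by
  have hsum : orient b c d + orient a b d = orient a c d + orient a b c := by
    simp only [orient]; ring
  obtain ⟨s, hs⟩ : ∃ s, s = orient a c d + orient a b c := ⟨_, rfl⟩
  have hs0 : 0 < s := by linarith
  refine ⟨(orient b c d / s) • a + (orient a b d / s) • c, ?_, ?_⟩
  · refine ⟨_, _, by positivity, by positivity, ?_, rfl⟩
    rw [← add_div, hsum, ← hs, div_self hs0.ne']
  · refine ⟨orient a c d / s, orient a b c / s, by positivity, by positivity, ?_, ?_⟩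
    · rw [← add_div, ← hs, div_self hs0.ne']
    · apply Complex.ext
      · simp only [Complex.add_re, Complex.real_smul, Complex.re_ofReal_mul]
        field_simp
        simp only [orient]; ring
      · simp only [Complex.add_im, Complex.real_smul, Complex.im_ofReal_mul]
        field_simp
        simp only [orient]; ring

lemma real_between {m n a b c : ℕ} (hab : a < b) (hbc : b < c) (hc : c < m + 2) :
    pt m n b ∈ segment ℝ (pt m n a) (pt m n c) := by
  have h1 := pt_re_lt (m := m) (n := n) hab (by omega)
  have h2 := pt_re_lt (m := m) (n := n) hbc (by omega)
  have i1 := pt_im_zero (m := m) (n := n) (i := a) (by omega)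
  have i2 := pt_im_zero (m := m) (n := n) (i := b) (by omega)
  have i3 := pt_im_zero (m := m) (n := n) (i := c) (by omega)
  set A := pt m n a
  set B := pt m n b
  set C := pt m n c
  have hs : 0 < C.re - A.re := by linarith
  refine ⟨(C.re - B.re) / (C.re - A.re), (B.re - A.re) / (C.re - A.re),
    div_nonneg (by linarith) hs.le, div_nonneg (by linarith) hs.le, ?_, ?_⟩
  · field_simp; ring
  · apply Complex.ext
    · simp only [Complex.add_re, Complex.real_smul, Complex.re_ofReal_mul]
      field_simp; ring
    · simp only [Complex.add_im, Complex.real_smul, Complex.im_ofReal_mul, i1, i2, i3]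
      ring

lemma pt_cross {m n a b c d : ℕ} (hab : a < b) (hbc : b < c) (hcd : c < d) (hd : d < m + 2 + n) :
    ∃ z, z ∈ segment ℝ (pt m n a) (pt m n c) ∧ z ∈ segment ℝ (pt m n b) (pt m n d) := by
  by_cases hr : m + 2 ≤ d
  · exact cross_meet (orient_nonneg (by omega) (by omega) (by omega))
      (orient_nonneg (by omega) (by omega) (by omega))
      (orient_nonneg (by omega) (by omega) (by omega)) (orient_pos (by omega) (by omega) hd hr)
  · exact ⟨pt m n b, real_between hab hbc (by omega), left_mem_segment _ _ _⟩

/-- Separation by an affine functional. -/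
lemma hull_disjoint_of_functional {A B : Set ℂ} (x y c : ℝ)
    (hA : ∀ z ∈ A, x * z.re + y * z.im ≤ c) (hB : ∀ z ∈ B, c < x * z.re + y * z.im) :
    Disjoint (convexHull ℝ A) (convexHull ℝ B) := by
  have hlin : IsLinearMap ℝ (fun z : ℂ => x * z.re + y * z.im) := by
    constructor
    · intro z w; simp; ring
    · intro a z; simp; ring
  have h1 : convexHull ℝ A ⊆ {z : ℂ | x * z.re + y * z.im ≤ c} :=
    convexHull_min hA (convex_halfSpace_le hlin c)
  have h2 : convexHull ℝ B ⊆ {z : ℂ | c < x * z.re + y * z.im} :=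
    convexHull_min hB (convex_halfSpace_gt hlin c)
  rw [Set.disjoint_left]
  intro z hz hz'
  have a := h1 hz
  have b := h2 hz'
  simp only [Set.mem_ofPred_eq] at a b
  linarith

lemma hull_disjoint_real {A B : Set ℂ} (u : ℝ)
    (hA : ∀ z ∈ A, z.im = 0 ∧ u ≤ z.re) (hB : ∀ z ∈ B, 0 ≤ z.im ∧ (z.im = 0 → z.re < u)) :
    Disjoint (convexHull ℝ A) (convexHull ℝ B) := by
  have h1 : convexHull ℝ A ⊆ {z : ℂ | z.im = 0 ∧ u ≤ z.re} := by
    refine convexHull_min hA ?_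
    rintro z ⟨hz1, hz2⟩ w ⟨hw1, hw2⟩ a b ha hb hab
    refine ⟨by simp [hz1, hw1], ?_⟩
    simp only [Complex.add_re, Complex.real_smul, Complex.re_ofReal_mul]
    have s1 := mul_le_mul_of_nonneg_left hz2 ha
    have s2 := mul_le_mul_of_nonneg_left hw2 hb
    have : a * u + b * u = u := by rw [← add_mul, hab, one_mul]
    linarith
  have h2 : convexHull ℝ B ⊆ {z : ℂ | 0 ≤ z.im ∧ (z.im = 0 → z.re < u)} := by
    refine convexHull_min hB ?_
    rintro z ⟨hz1, hz2⟩ w ⟨hw1, hw2⟩ a b ha hb hab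
    simp only [Set.mem_ofPred_eq, Complex.add_re, Complex.add_im, Complex.real_smul,
      Complex.re_ofReal_mul, Complex.im_ofReal_mul]
    have p1 := mul_nonneg ha hz1
    have p2 := mul_nonneg hb hw1
    refine ⟨by linarith, fun h0 => ?_⟩
    have q1 : a * z.im = 0 := by linarith
    have q2 : b * w.im = 0 := by linarith
    rcases ha.eq_or_lt with h | h
    · subst h
      have : b = 1 := by linarith
      subst this
      have := hw2 (by linarith)
      linarith
    · rcases hb.eq_or_lt with h' | h'
      · subst h'
        have : a = 1 := by linarith
        subst this
        have := hz2 (by linarith)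
        linarith
      · have r1 := hz2 ((mul_eq_zero.1 q1).resolve_left h.ne')
        have r2 := hw2 ((mul_eq_zero.1 q2).resolve_left h'.ne')
        have s1 := mul_lt_mul_of_pos_left r1 h
        have s2 := mul_lt_mul_of_pos_left r2 h'
        have : a * u + b * u = u := by rw [← add_mul, hab, one_mul]
        linarith
  rw [Set.disjoint_left]
  intro z hz hz'
  have a := h1 hz
  have b := h2 hz'
  simp only [Set.mem_ofPred_eq] at a b
  have := b.2 a.1
  linarith [a.2]

lemma pt_separated {m n u v : ℕ} (huv : u ≤ v) (hv : v < m + 2 + n) {I J : Set ℕ}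
    (hI : ∀ i ∈ I, u ≤ i ∧ i ≤ v) (hJ : ∀ j ∈ J, j < m + 2 + n ∧ (j < u ∨ v < j))
    (hJr : v < m + 2 → ∀ j ∈ J, j < m + 2 → j < u) :
    Disjoint (convexHull ℝ (pt m n '' I)) (convexHull ℝ (pt m n '' J)) := by
  by_cases hr : v < m + 2
  · apply hull_disjoint_real (pt m n u).re
    · rintro _ ⟨i, hi, rfl⟩
      obtain ⟨h1, h2⟩ := hI i hi
      refine ⟨pt_im_zero (by omega), ?_⟩
      rcases h1.eq_or_lt with h | h
      · rw [h]
      · exact (pt_re_lt h (by omega)).le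
    · rintro _ ⟨j, hj, rfl⟩
      obtain ⟨h1, h2⟩ := hJ j hj
      by_cases hjr : j < m + 2
      · have := hJr hr j hj hjr
        exact ⟨(pt_im_zero hjr).ge, fun _ => pt_re_lt this (by omega)⟩
      · have := pt_im_pos (m := m) (n := n) (i := j) (by omega) h1
        exact ⟨this.le, fun h => absurd h this.ne'⟩
  · rcases huv.eq_or_lt with h | huv
    · subst h
      refine (hull_disjoint_of_functional (-(pt m n u).re) (-(pt m n u).im) (-1) ?_ ?_)
      · rintro _ ⟨i, hi, rfl⟩
        obtain ⟨h1, h2⟩ := hI i hi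
        have : i = u := by omega
        subst this
        have := pt_normSq_eq (m := m) (n := n) (i := i) (by omega)
        nlinarith
      · rintro _ ⟨j, hj, rfl⟩
        obtain ⟨h1, h2⟩ := hJ j hj
        have hne : pt m n j ≠ pt m n u := fun h => by
          have := pt_inj h1 hv h
          omega
        have e1 := pt_normSq_eq (m := m) (n := n) (i := u) (by omega)
        have e2 := pt_normSq_le (m := m) (n := n) (i := j)
        have : 0 < ((pt m n j).re - (pt m n u).re) ^ 2 + ((pt m n j).im - (pt m n u).im) ^ 2 := by
          by_contra hcon
          apply hne
          apply Complex.ext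
          · nlinarith [sq_nonneg ((pt m n j).re - (pt m n u).re),
              sq_nonneg ((pt m n j).im - (pt m n u).im)]
          · nlinarith [sq_nonneg ((pt m n j).re - (pt m n u).re),
              sq_nonneg ((pt m n j).im - (pt m n u).im)]
        nlinarith
    · set U := pt m n u with hU
      set V := pt m n v with hV
      have hfun : ∀ z : ℂ, orient U V z = (-(V.im - U.im)) * z.re + (V.re - U.re) * z.im -
          ((-(V.im - U.im)) * U.re + (V.re - U.re) * U.im) := by
        intro z; simp only [orient]; ring
      refine (hull_disjoint_of_functional (-(V.im - U.im)) (V.re - U.re)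
        ((-(V.im - U.im)) * U.re + (V.re - U.re) * U.im) ?_ ?_)
      · rintro _ ⟨i, hi, rfl⟩
        obtain ⟨h1, h2⟩ := hI i hi
        suffices orient U V (pt m n i) ≤ 0 by have := hfun (pt m n i); linarith
        rcases h1.eq_or_lt with h | h
        · rw [← h]; simp [orient, U]
        rcases h2.eq_or_lt with h' | h'
        · rw [h']; simp only [orient]; linarith
        have := orient_nonneg (m := m) (n := n) h h' hv
        simp only [orient] at this ⊢
        linarith
      · rintro _ ⟨j, hj, rfl⟩
        obtain ⟨h1, h2⟩ := hJ j hj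
        suffices 0 < orient U V (pt m n j) by have := hfun (pt m n j); linarith
        rcases h2 with h | h
        · have := orient_pos (m := m) (n := n) h huv hv (by omega)
          simp only [orient, U, V] at this ⊢
          linarith
        · exact orient_pos huv h h1 (by omega)

/-! ### Noncrossing partitions and label functions -/

lemma mem_Sconfig {m n : ℕ} {z : ℂ} : z ∈ Sconfig m n ↔ ∃ i < m + 2 + n, pt m n i = z := by
  simp only [Sconfig, Finset.mem_union, Finset.mem_image, Finset.mem_range, Finset.mem_Icc]
  constructor
  · rintro (⟨k, hk, rfl⟩ | ⟨j, hj, rfl⟩)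
    · exact ⟨k, by omega, by rw [pt, if_pos hk]⟩
    · exact ⟨j + (m + 1), by omega, by rw [pt, if_neg (by omega), Nat.add_sub_cancel]⟩
  · rintro ⟨i, hi, rfl⟩
    by_cases h : i < m + 2
    · exact Or.inl ⟨i, h, by rw [pt, if_pos h]⟩
    · exact Or.inr ⟨i - (m + 1), by omega, by rw [pt, if_neg h]⟩

lemma pt_mem {m n i : ℕ} (h : i < m + 2 + n) : pt m n i ∈ Sconfig m n := mem_Sconfig.2 ⟨i, h, rfl⟩

/-- The label function of a partition. -/
noncomputable def labOf {m n : ℕ} (π : Finpartition (Sconfig m n)) (a : ℕ) : ℕ :=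
  if a < m + 2 + n then sInf {b | π.part (pt m n b) = π.part (pt m n a)} else a

lemma labOf_le {m n : ℕ} (π : Finpartition (Sconfig m n)) (a : ℕ) : labOf π a ≤ a := by
  unfold labOf
  split_ifs
  · exact Nat.sInf_le rfl
  · exact le_rfl

lemma part_labOf {m n : ℕ} (π : Finpartition (Sconfig m n)) (a : ℕ) :
    π.part (pt m n (labOf π a)) = π.part (pt m n a) := by
  unfold labOf
  split_ifs
  · exact Nat.sInf_mem (s := {b | π.part (pt m n b) = π.part (pt m n a)}) ⟨a, rfl⟩
  · rfl

lemma labOf_eq_iff {m n : ℕ} (π : Finpartition (Sconfig m n)) {a b : ℕ} (ha : a < m + 2 + n)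
    (hb : b < m + 2 + n) : labOf π a = labOf π b ↔ π.part (pt m n a) = π.part (pt m n b) := by
  constructor
  · intro h
    rw [← part_labOf π a, h, part_labOf]
  · intro h
    rw [labOf, labOf, if_pos ha, if_pos hb, h]

lemma part_eq_of_hull {m n : ℕ} {π : Finpartition (Sconfig m n)} (hπ : IsNoncrossing π) {a b : ℕ}
    (ha : a < m + 2 + n) (hb : b < m + 2 + n) {z : ℂ}
    (h1 : z ∈ convexHull ℝ (π.part (pt m n a) : Set ℂ))
    (h2 : z ∈ convexHull ℝ (π.part (pt m n b) : Set ℂ)) :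
    π.part (pt m n a) = π.part (pt m n b) := by
  by_contra hne
  exact Set.disjoint_left.1 (hπ (π.part_mem.2 (pt_mem ha)) (π.part_mem.2 (pt_mem hb)) hne) h1 h2

lemma segment_sub_hull {m n : ℕ} (π : Finpartition (Sconfig m n)) {a b : ℕ}
    (ha : a < m + 2 + n) (hb : b < m + 2 + n) (h : π.part (pt m n a) = π.part (pt m n b)) :
    segment ℝ (pt m n a) (pt m n b) ⊆ convexHull ℝ (π.part (pt m n b) : Set ℂ) := by
  apply segment_subset_convexHull
  · rw [← h]
    exact π.mem_part (pt_mem ha)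
  · exact π.mem_part (pt_mem hb)

lemma labOf_mem {m n : ℕ} {π : Finpartition (Sconfig m n)} (hπ : IsNoncrossing π) :
    labOf π ∈ Lab (m + 2) (m + 2 + n) := by
  rw [mem_Lab]
  refine ⟨labOf_le π, fun a ha => by rw [labOf, if_neg (by omega)], ?_, ?_⟩
  · intro b c h1 h2
    by_cases hc : c < m + 2 + n
    · by_contra hlt
      push Not at hlt
      have hb : b < m + 2 + n := by omega
      have hne : π.part (pt m n b) ≠ π.part (pt m n c) := fun h => by
        rw [(labOf_eq_iff π hb hc).2 h] at hlt
        exact lt_irrefl _ hlt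
      have hbc : b < c := lt_of_le_of_ne h2 (fun h => hne (by rw [h]))
      have hcb : labOf π c < b := lt_of_le_of_ne h1 (fun h => hne (by rw [← h, part_labOf]))
      obtain ⟨z, hz1, hz2⟩ := pt_cross (m := m) (n := n) hlt hcb hbc hc
      exact hne (part_eq_of_hull hπ hb hc
        (segment_sub_hull π (by omega) hb (part_labOf π b) hz1)
        (segment_sub_hull π (by omega) hc (part_labOf π c) hz2))
    · have : labOf π c = c := by rw [labOf, if_neg hc]
      have : b = c := by omega
      rw [this]
  · intro b c hc h1 h2
    rcases h2.eq_or_lt with h | hbc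
    · rw [h]
    rcases h1.eq_or_lt with h | hcb
    · rw [h]; exact labOf_le π b
    have hz := real_between (n := n) hcb hbc hc
    have hb : b < m + 2 + n := by omega
    have := part_eq_of_hull hπ hb (by omega) (subset_convexHull ℝ _ (π.mem_part (pt_mem hb)))
      (segment_sub_hull π (by omega) (by omega) (part_labOf π c) hz)
    rw [(labOf_eq_iff π hb (by omega)).2 this]

lemma labOf_injective {m n : ℕ} {π π' : Finpartition (Sconfig m n)} (h : labOf π = labOf π') :
    π = π' := by
  have key : ∀ a < m + 2 + n, π.part (pt m n a) = π'.part (pt m n a) := by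
    intro a ha
    have sub : ∀ (σ τ : Finpartition (Sconfig m n)), labOf σ = labOf τ →
        σ.part (pt m n a) ⊆ τ.part (pt m n a) := by
      intro σ τ hst z hz
      obtain ⟨b, hb, rfl⟩ := mem_Sconfig.1 (σ.part_subset _ hz)
      rw [Finpartition.mem_part_iff_part_eq_part _ (pt_mem hb) (pt_mem ha)] at hz ⊢
      rw [← labOf_eq_iff _ hb ha] at hz ⊢
      rw [← hst, hz]
    exact Finset.Subset.antisymm (sub _ _ h) (sub _ _ h.symm)
  have sub : ∀ (σ τ : Finpartition (Sconfig m n)),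
      (∀ a < m + 2 + n, σ.part (pt m n a) = τ.part (pt m n a)) → σ.parts ⊆ τ.parts := by
    intro σ τ hst B hB
    obtain ⟨x, hx⟩ := σ.nonempty_of_mem_parts hB
    obtain ⟨a, ha, rfl⟩ := mem_Sconfig.1 (σ.le hB hx)
    rw [← σ.part_eq_of_mem hB hx, hst a ha]
    exact τ.part_mem.2 (pt_mem ha)
  exact Finpartition.ext (Finset.Subset.antisymm (sub _ _ key) (sub _ _ fun a ha => (key a ha).symm))

/-- Index of a point. -/
noncomputable def ptIdx (m n : ℕ) (z : ℂ) : ℕ := sInf {i | pt m n i = z}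

lemma ptIdx_pt {m n i : ℕ} (h : i < m + 2 + n) : ptIdx m n (pt m n i) = i := by
  have h1 : ptIdx m n (pt m n i) ≤ i := Nat.sInf_le rfl
  have h2 : pt m n (ptIdx m n (pt m n i)) = pt m n i :=
    Nat.sInf_mem (s := {j | pt m n j = pt m n i}) ⟨i, rfl⟩
  exact pt_inj (by omega) h h2

lemma Lab_hull_disjoint {m n : ℕ} {f : ℕ → ℕ} (hf : f ∈ Lab (m + 2) (m + 2 + n)) {p q : ℕ}
    (hpq : p < q) (hq : ∃ a < m + 2 + n, f a = q) :
    Disjoint (convexHull ℝ (pt m n '' {i | i < m + 2 + n ∧ f i = q}))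
      (convexHull ℝ (pt m n '' {i | i < m + 2 + n ∧ f i = p})) := by
  rw [mem_Lab] at hf
  obtain ⟨h1, h2, h3, h4⟩ := hf
  obtain ⟨a, ha, haq⟩ := hq
  obtain ⟨v, hv, hmax⟩ := Finset.exists_max_image
    ((Finset.range (m + 2 + n)).filter (fun i => f i = q)) id ⟨a, by simp [ha, haq]⟩
  simp only [Finset.mem_filter, Finset.mem_range, id] at hv hmax
  have hqv : q ≤ v := by have := h1 v; omega
  have hJ : ∀ j ∈ {i | i < m + 2 + n ∧ f i = p}, j < m + 2 + n ∧ (j < q ∨ v < j) := by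
    rintro j ⟨hj, hjp⟩
    refine ⟨hj, ?_⟩
    by_contra hcon
    push Not at hcon
    have := h3 j v (by omega) (by omega)
    omega
  refine pt_separated hqv hv.1 ?_ hJ ?_
  · rintro i ⟨hi, hiq⟩
    refine ⟨?_, hmax i ⟨hi, hiq⟩⟩
    have := h1 i; omega
  · rintro hvr j hj hjr
    have hj1 := (hJ j hj).2
    obtain ⟨hj, hjp⟩ := hj
    by_contra hcon
    have := h4 v j hjr (by omega) (by omega)
    omega

lemma labOf_surjective {m n : ℕ} {f : ℕ → ℕ} (hf : f ∈ Lab (m + 2) (m + 2 + n)) :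
    ∃ π : Finpartition (Sconfig m n), IsNoncrossing π ∧ labOf π = f := by
  classical
  let r : Setoid ℂ := Setoid.ker (fun z => f (ptIdx m n z))
  let π : Finpartition (Sconfig m n) := Finpartition.ofSetSetoid r (Sconfig m n)
  have hr : ∀ a b, a < m + 2 + n → b < m + 2 + n → (r (pt m n a) (pt m n b) ↔ f a = f b) := by
    intro a b ha hb
    change f (ptIdx m n (pt m n a)) = f (ptIdx m n (pt m n b)) ↔ _
    rw [ptIdx_pt ha, ptIdx_pt hb]
  have hpart : ∀ a b, a < m + 2 + n → b < m + 2 + n →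
      (π.part (pt m n b) = π.part (pt m n a) ↔ f b = f a) := by
    intro a b ha hb
    rw [← Finpartition.mem_part_iff_part_eq_part _ (pt_mem hb) (pt_mem ha),
      Finpartition.mem_part_ofSetSetoid_iff_rel, hr a b ha hb]
    simp [pt_mem ha, pt_mem hb, eq_comm]
  refine ⟨π, ?_, ?_⟩
  · have hset : ∀ a < m + 2 + n, (π.part (pt m n a) : Set ℂ) =
        pt m n '' {i | i < m + 2 + n ∧ f i = f a} := by
      intro a ha
      ext z
      rw [Finset.mem_coe, Finpartition.mem_part_ofSetSetoid_iff_rel]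
      constructor
      · rintro ⟨_, hz, hrz⟩
        obtain ⟨b, hb, rfl⟩ := mem_Sconfig.1 hz
        exact ⟨b, ⟨hb, ((hr a b ha hb).1 hrz).symm⟩, rfl⟩
      · rintro ⟨b, ⟨hb, hba⟩, rfl⟩
        exact ⟨pt_mem ha, pt_mem hb, (hr a b ha hb).2 hba.symm⟩
    intro B₁ hB₁ B₂ hB₂ hne
    obtain ⟨x, hx⟩ := π.nonempty_of_mem_parts hB₁
    obtain ⟨y, hy⟩ := π.nonempty_of_mem_parts hB₂
    obtain ⟨a, ha, rfl⟩ := mem_Sconfig.1 (π.le hB₁ hx)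
    obtain ⟨b, hb, rfl⟩ := mem_Sconfig.1 (π.le hB₂ hy)
    rw [← π.part_eq_of_mem hB₁ hx, ← π.part_eq_of_mem hB₂ hy] at hne ⊢
    have hab : f a ≠ f b := fun h => hne ((hpart b a hb ha).2 h)
    rw [hset a ha, hset b hb]
    rcases lt_or_gt_of_ne hab with h | h
    · exact (Lab_hull_disjoint hf h ⟨b, hb, rfl⟩).symm
    · exact Lab_hull_disjoint hf h ⟨a, ha, rfl⟩
  · rw [mem_Lab] at hf
    obtain ⟨h1, h2, h3, h4⟩ := hf
    funext a
    by_cases ha : a < m + 2 + n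
    · have hle := labOf_le π a
      have e1 := (hpart a (labOf π a) ha (by omega)).1 (part_labOf π a)
      have e2 := h1 (labOf π a)
      have e3 : f (f a) = f a := le_antisymm (h1 _) (h3 _ _ le_rfl (h1 a))
      have e4 : labOf π a ≤ f a := by
        rw [labOf, if_pos ha]
        exact Nat.sInf_le ((hpart a (f a) ha (by have := h1 a; omega)).2 e3)
      omega
    · rw [labOf, if_neg ha, h2 a (by omega)]

lemma card_NC (m n : ℕ) : Nat.card (NC (Sconfig m n)) = (Lab (m + 2) (m + 2 + n)).card := by
  rw [← Nat.card_eq_finsetCard]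
  refine Nat.card_eq_of_bijective
    (fun π : NC (Sconfig m n) => (⟨labOf π.1, labOf_mem π.2⟩ : Lab (m + 2) (m + 2 + n))) ⟨?_, ?_⟩
  · intro π π' h
    exact Subtype.ext (labOf_injective (congrArg Subtype.val h))
  · rintro ⟨f, hf⟩
    obtain ⟨π, hπ, h⟩ := labOf_surjective hf
    exact ⟨⟨π, hπ⟩, Subtype.ext h⟩

/-- `Y² ⬝ (1 - X(1 + C(Y))) ⬝ S(X,Y) = C(Y) - 1 - Y` in `ℤ⟦X,Y⟧`. -/
theorem nc_S_generating_function :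
    MvPowerSeries.X 1 ^ 2 * (1 - MvPowerSeries.X 0 * (1 + Cseries)) * Sseries =
      Cseries - 1 - MvPowerSeries.X 1 := by
  exact Sseries_final card_NC
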